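/- Let f : S → ℂ be a non-zero solution of the integral Van Vleck equation. Then ∫_S f(t)dμ(t) = Σ_{i∈I} c_i f(z_i) ≠ 0. -/

import Mathlib

/-!
Let `T h x = ∫ h(xt) dμ(t)` and let `U` be the same operator for the image of `μ` under `τ`. The
equation says that `(T f)(x τ(y)) - (T f)(xy) = 2 f(x) f(y)`; it forces `f ∘ τ = -f`. Write
`m = ∫ f dμ`. Integrating the equation over `x` and over `y` gives
`(T² f) ∘ τ = T² f + 2m f` and `U T f = T² f + 2m f`. Since composition with `τ` exchanges the
commuting operators `T` and `U`, the function `U T f` is odd under `τ`, and comparing the two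
identities yields `T² f = -m f`. On the other hand `T` cannot annihilate `f` or `T f`, because the
right-hand sides `2 f(x) f(y)` and `2 (T f)(x) f(y)` would vanish with `T f` and `T² f`.
-/

namespace VanVleck

variable {R S ι κ : Type*} [Semigroup S]

section CommSemiring

variable [CommSemiring R]

/-- The operator `h ↦ (x ↦ ∫ h(xt) dμ(t))` for the finitely supported measure
`μ = ∑ i ∈ I, c i • δ_{z i}`. -/
def rightConv (I : Finset ι) (c : ι → R) (z : ι → S) : (S → R) →ₗ[R] (S → R) :=
  ∑ i ∈ I, c i • LinearMap.funLeft R R (· * z i)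

theorem rightConv_apply (I : Finset ι) (c : ι → R) (z : ι → S) (h : S → R) (x : S) :
    rightConv I c z h x = ∑ i ∈ I, c i * h (x * z i) := by
  simp [rightConv, LinearMap.funLeft_apply]

theorem rightConv_comm {I : Finset ι} {J : Finset κ} {z : ι → S} {w : κ → S}
    (hzw : ∀ i ∈ I, ∀ j ∈ J, Commute (z i) (w j)) (c : ι → R) (d : κ → R) (h : S → R) :
    rightConv I c z (rightConv J d w h) = rightConv J d w (rightConv I c z h) := by
  funext x
  simp only [rightConv_apply, Finset.mul_sum]
  rw [Finset.sum_comm]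
  refine Finset.sum_congr rfl fun j hj ↦ Finset.sum_congr rfl fun i hi ↦ ?_
  rw [mul_assoc x, (hzw i hi j hj).eq, ← mul_assoc x, mul_left_comm]

theorem rightConv_comp {τ : S → S} {I : Finset ι} {z w : ι → S}
    (hτ : ∀ i ∈ I, ∀ y, τ y * z i = τ (y * w i)) (c : ι → R) (h : S → R) :
    rightConv I c z h ∘ τ = rightConv I c w (h ∘ τ) := by
  funext y
  simp only [Function.comp_apply, rightConv_apply]
  exact Finset.sum_congr rfl fun i hi ↦ by rw [hτ i hi]

end CommSemiring

variable [CommRing R]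

/-- The relation `g(x τ(y)) - g(xy) = 2 k(x) f(y)`. The integral Van Vleck equation is the case
`k = f`, `g = rightConv I c z f`; separating the three functions makes the relation stable under
applying `rightConv` to `k` and `g`. -/
def HasVanVleckDifference (τ : S → S) (f k g : S → R) : Prop :=
  ∀ x y, g (x * τ y) - g (x * y) = 2 * k x * f y

namespace HasVanVleckDifference

variable {τ : S → S} {f k g : S → R} {I : Finset ι} {z : ι → S}

theorem map_rightConv (H : HasVanVleckDifference τ f k g) (hz : ∀ i ∈ I, ∀ s, Commute (z i) s)
    (c : ι → R) :
    HasVanVleckDifference τ f (rightConv I c z k) (rightConv I c z g) := by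
  intro x y
  simp only [rightConv_apply]
  rw [← Finset.sum_sub_distrib, Finset.mul_sum, Finset.sum_mul]
  refine Finset.sum_congr rfl fun i hi ↦ ?_
  have move_right (s : S) : x * s * z i = x * z i * s := by
    rw [mul_assoc, ← (hz i hi s).eq, mul_assoc]
  rw [move_right, move_right]
  linear_combination c i * H (x * z i) y

theorem rightConv_comp_eq_add (H : HasVanVleckDifference τ f k g)
    (hz : ∀ i ∈ I, ∀ s, Commute (z i) s) (c : ι → R) :
    rightConv I c z g ∘ τ =
      rightConv I c z g + (2 * ∑ i ∈ I, c i * k (z i)) • f := by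
  funext y
  simp only [Function.comp_apply, Pi.add_apply, Pi.smul_apply, smul_eq_mul, rightConv_apply]
  rw [Finset.mul_sum, Finset.sum_mul, ← Finset.sum_add_distrib]
  refine Finset.sum_congr rfl fun i hi ↦ ?_
  rw [← (hz i hi _).eq, ← (hz i hi _).eq]
  linear_combination c i * H (z i) y

theorem rightConv_pushforward_eq_add (H : HasVanVleckDifference τ f k g) (I : Finset ι) (c : ι → R)
    (z : ι → S) :
    rightConv I c (τ ∘ z) g =
      rightConv I c z g + (2 * ∑ i ∈ I, c i * f (z i)) • k := by
  funext x
  simp only [Function.comp_apply, Pi.add_apply, Pi.smul_apply, smul_eq_mul, rightConv_apply]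
  rw [Finset.mul_sum, Finset.sum_mul, ← Finset.sum_add_distrib]
  refine Finset.sum_congr rfl fun i _ ↦ ?_
  linear_combination c i * H x (z i)

variable [NoZeroDivisors R] [NeZero (2 : R)]

theorem comp_eq_neg (H : HasVanVleckDifference τ f k g) (hτ : Function.Involutive τ)
    (hk : k ≠ 0) : f ∘ τ = -f := by
  obtain ⟨a, ha⟩ := Function.ne_iff.mp hk
  funext y
  have hy := H a y
  have hτy := H a (τ y)
  rw [hτ y] at hτy
  have hsum : 2 * k a * (f (τ y) + f y) = 0 := by linear_combination -hy - hτy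
  exact eq_neg_of_add_eq_zero_left
    ((mul_eq_zero.mp hsum).resolve_left (mul_ne_zero two_ne_zero ha))

theorem ne_zero (H : HasVanVleckDifference τ f k g) (hf : f ≠ 0) (hk : k ≠ 0) : g ≠ 0 := by
  rintro rfl
  obtain ⟨a, ha⟩ := Function.ne_iff.mp hk
  obtain ⟨b, hb⟩ := Function.ne_iff.mp hf
  have hab : 2 * k a * f b = 0 := by simpa using (H a b).symm
  exact mul_ne_zero (mul_ne_zero two_ne_zero ha) hb hab

end HasVanVleckDifference

variable {τ : S → S} {I : Finset ι} {c : ι → R} {z : ι → S} {f : S → R}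

theorem rightConv_pushforward_comp_eq_neg (hτ : Function.Involutive τ)
    (hτz : ∀ i ∈ I, ∀ s, τ (s * z i) = τ s * τ (z i)) (hz : ∀ i ∈ I, ∀ s, Commute (z i) s)
    (hodd : f ∘ τ = -f) :
    rightConv I c (τ ∘ z) (rightConv I c z f) ∘ τ =
      -rightConv I c (τ ∘ z) (rightConv I c z f) := by
  have hτz' : ∀ i ∈ I, ∀ s, τ s * z i = τ (s * (τ ∘ z) i) := fun i hi s ↦ by
    rw [← hτ (τ s * z i), hτz i hi, hτ s, Function.comp_apply]
  calc rightConv I c (τ ∘ z) (rightConv I c z f) ∘ τ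
      = rightConv I c z (rightConv I c z f ∘ τ) :=
        rightConv_comp (fun i hi s ↦ (hτz i hi s).symm) c _
    _ = rightConv I c z (rightConv I c (τ ∘ z) (f ∘ τ)) := by rw [rightConv_comp hτz']
    _ = -rightConv I c z (rightConv I c (τ ∘ z) f) := by rw [hodd, map_neg, map_neg]
    _ = -rightConv I c (τ ∘ z) (rightConv I c z f) := by
        rw [rightConv_comm fun i hi j _ ↦ hz i hi ((τ ∘ z) j)]

theorem rightConv_rightConv_eq_neg_smul [NoZeroDivisors R] [NeZero (2 : R)]
    (H : HasVanVleckDifference τ f f (rightConv I c z f)) (hτ : Function.Involutive τ)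
    (hτz : ∀ i ∈ I, ∀ s, τ (s * z i) = τ s * τ (z i)) (hz : ∀ i ∈ I, ∀ s, Commute (z i) s)
    (hf : f ≠ 0) :
    rightConv I c z (rightConv I c z f) = -(∑ i ∈ I, c i * f (z i)) • f := by
  have hodd : f ∘ τ = -f := H.comp_eq_neg hτ hf
  have hcomp : rightConv I c z (rightConv I c z f) ∘ τ =
      rightConv I c (τ ∘ z) (rightConv I c z f) := by
    rw [H.rightConv_comp_eq_add hz, H.rightConv_pushforward_eq_add]
  have hneg : rightConv I c z (rightConv I c z f) =
      -(rightConv I c z (rightConv I c z f) + (2 * ∑ i ∈ I, c i * f (z i)) • f) :=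
    calc rightConv I c z (rightConv I c z f)
        = (rightConv I c z (rightConv I c z f) ∘ τ) ∘ τ := by
          rw [Function.comp_assoc, hτ.comp_self, Function.comp_id]
      _ = -rightConv I c (τ ∘ z) (rightConv I c z f) := by
          rw [hcomp, rightConv_pushforward_comp_eq_neg hτ hτz hz hodd]
      _ = _ := by rw [H.rightConv_pushforward_eq_add]
  funext x
  have hx := congrFun hneg x
  simp only [Pi.neg_apply, Pi.add_apply, Pi.smul_apply, smul_eq_mul] at hx ⊢
  refine mul_left_cancel₀ (two_ne_zero (α := R)) ?_
  linear_combination hx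

end VanVleck

/-- The condition `hτz` covers homomorphic as well as anti-homomorphic involutions `τ`. -/
theorem stmt_1_general {R S ι : Type*} [CommRing R] [NoZeroDivisors R] [NeZero (2 : R)]
    [Semigroup S] (τ : S → S) (hτinv : ∀ x : S, τ (τ x) = x)
    (I : Finset ι) (c : ι → R) (z : ι → S)
    (hτz : ∀ i ∈ I, ∀ s : S, τ (s * z i) = τ s * τ (z i))
    (hz : ∀ i ∈ I, ∀ s : S, z i * s = s * z i)
    (f : S → R) (hf : f ≠ 0)
    (hVV : ∀ x y : S,
      (∑ i ∈ I, c i * f (x * τ y * z i)) - (∑ i ∈ I, c i * f (x * y * z i))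
        = 2 * f x * f y) :
    (∑ i ∈ I, c i * f (z i)) ≠ 0 := by
  intro hm
  have H : VanVleck.HasVanVleckDifference τ f f (VanVleck.rightConv I c z f) := fun x y ↦ by
    simpa only [VanVleck.rightConv_apply] using hVV x y
  have hconv_ne : VanVleck.rightConv I c z f ≠ 0 := H.ne_zero hf hf
  have hconv₂_ne : VanVleck.rightConv I c z (VanVleck.rightConv I c z f) ≠ 0 :=
    (H.map_rightConv hz c).ne_zero hf hconv_ne
  apply hconv₂_ne
  rw [VanVleck.rightConv_rightConv_eq_neg_smul H hτinv hτz hz hf, hm, neg_zero, zero_smul]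

theorem stmt_1 {S ι : Type*} [Semigroup S] (τ : S → S)
    (hτmul : ∀ x y : S, τ (x * y) = τ y * τ x)
    (hτinv : ∀ x : S, τ (τ x) = x)
    (I : Finset ι) (c : ι → ℂ) (z : ι → S)
    (hz : ∀ i ∈ I, ∀ s : S, z i * s = s * z i)
    (f : S → ℂ) (hf : f ≠ 0)
(hVV : ∀ x y : S,
      (∑ i ∈ I, c i * f (x * τ y * z i)) - (∑ i ∈ I, c i * f (x * y * z i))
        = 2 * f x * f y) :
    (∑ i ∈ I, c i * f (z i)) ≠ 0 :=
  stmt_1_general τ hτinv I c z (fun i hi s ↦ by rw [← hz i hi, hτmul]) hz f hf hVV
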